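/- Let G be a triconnected 4-planar graph embedded in the plane with a separating triangle T on vertices {A, B, Γ}. Then each of A, B, Γ has degree exactly 4 and is adjacent to exactly one vertex of the subgraph inside T and exactly one vertex of the subgraph outside T; moreover, the three inside neighbors A_in, B_in, Γ_in are either pairwise distinct or all equal to the same vertex, and likewise the three outside neighbors A_out, B_out, Γ_out are either pairwise distinct or all equal to the same vertex. -/

import Mathlib

open Set

universe u

/-- A topological embedding of a simple graph in the plane: vertices are mapped to
distinct points and every edge is realized by a simple arc joining the images of its
endpoints, such that two arcs of distinct edges meet only in common endpoints and no
vertex point lies in the interior of an arc. -/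
structure PlaneEmbedding {V : Type u} (G : SimpleGraph V) where
  pos : V → ℝ × ℝ
  pos_inj : Function.Injective pos
  arc : ∀ ⦃u v : V⦄, G.Adj u v → Set (ℝ × ℝ)
  arc_symm : ∀ ⦃u v : V⦄ (h : G.Adj u v), arc h.symm = arc h
  arc_curve : ∀ ⦃u v : V⦄ (h : G.Adj u v), ∃ f : ℝ → ℝ × ℝ,
    ContinuousOn f (Set.Icc 0 1) ∧ Set.InjOn f (Set.Icc 0 1) ∧
    f 0 = pos u ∧ f 1 = pos v ∧ f '' Set.Icc 0 1 = arc h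
  arc_inter : ∀ ⦃u v w z : V⦄ (h₁ : G.Adj u v) (h₂ : G.Adj w z),
    s(u, v) ≠ s(w, z) → arc h₁ ∩ arc h₂ ⊆ ({pos u, pos v} ∩ {pos w, pos z} : Set (ℝ × ℝ))
  pos_arc : ∀ ⦃u v : V⦄ (h : G.Adj u v) (w : V), pos w ∈ arc h → w = u ∨ w = v

/-- A graph is planar if it admits a topological embedding in the plane. -/
def SimpleGraph.IsPlanar {V : Type u} (G : SimpleGraph V) : Prop :=
  Nonempty (PlaneEmbedding G)

/-- The point set covered by a plane embedding. -/
def PlaneEmbedding.drawing {V : Type u} {G : SimpleGraph V} (E : PlaneEmbedding G) :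
    Set (ℝ × ℝ) :=
  Set.range E.pos ∪ ⋃ (u : V) (v : V) (h : G.Adj u v), E.arc h

/-- A face of a plane embedding is a connected component of the complement of the drawing. -/
def PlaneEmbedding.IsFace {V : Type u} {G : SimpleGraph V} (E : PlaneEmbedding G)
    (F : Set (ℝ × ℝ)) : Prop :=
  ∃ p, p ∉ E.drawing ∧ F = connectedComponentIn E.drawingᶜ p

/-- A vertex is incident to a face if its point lies on the boundary of the face. -/
def PlaneEmbedding.VertexOnFace {V : Type u} {G : SimpleGraph V} (E : PlaneEmbedding G)
    (v : V) (F : Set (ℝ × ℝ)) : Prop :=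
  E.pos v ∈ closure F

/-- Maximum degree at most `d`. -/
def SimpleGraph.MaxDegreeLE {V : Type u} (G : SimpleGraph V) (d : ℕ) : Prop :=
  ∀ v : V, (G.neighborSet v).ncard ≤ d

/-- A graph is triconnected (3-connected) if it has more than three vertices, is
connected, and stays connected after removing any two vertices. -/
def SimpleGraph.IsTriconnected {V : Type u} (G : SimpleGraph V) : Prop :=
  3 < Nat.card V ∧ G.Connected ∧
    ∀ u v : V, (G.induce {w : V | w ≠ u ∧ w ≠ v}).Connected

/-- A graph is biconnected (2-connected) if it has more than two vertices, is
connected, and stays connected after removing any single vertex. -/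
def SimpleGraph.IsBiconnected {V : Type u} (G : SimpleGraph V) : Prop :=
  2 < Nat.card V ∧ G.Connected ∧ ∀ u : V, (G.induce {w : V | w ≠ u}).Connected

/-- A graph is subhamiltonian if it is a spanning subgraph of a planar hamiltonian graph. -/
def SimpleGraph.IsSubhamiltonian {V : Type u} [Fintype V] (G : SimpleGraph V) : Prop :=
  ∃ H : SimpleGraph V, G ≤ H ∧ H.IsPlanar ∧ (letI := Classical.decEq V; H.IsHamiltonian)

/-- The graph consisting of the edges of the cyclic vertex sequence `σ`. -/
def cyclicSuccGraph {W : Type u} (σ : ZMod (Nat.card W) ≃ W) : SimpleGraph W :=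
  SimpleGraph.fromRel fun u v => ∃ i, u = σ i ∧ v = σ (i + 1)

/-- The cyclic ordering `σ` of all vertices of `G` is a subhamiltonian cycle for `G` if
adding the edges between consecutive vertices of `σ` keeps the graph planar. -/
def SimpleGraph.IsSubhamiltonianCycle {W : Type u} (G : SimpleGraph W)
    (σ : ZMod (Nat.card W) ≃ W) : Prop :=
  SimpleGraph.IsPlanar (G ⊔ cyclicSuccGraph σ)

/-- The edges (pairs of consecutive vertices) of the cyclic sequence `σ`. -/
def cycleEdges {W : Type u} (σ : ZMod (Nat.card W) ≃ W) : Set (Sym2 W) :=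
  {e | ∃ i, e = s(σ i, σ (i + 1))}

/-- The subhamiltonian cycle `σ` crosses the face `F` at position `i` if the two
consecutive vertices `σ i` and `σ (i+1)` are both incident to `F` but not adjacent. -/
def CrossesFaceAt {V : Type u} {G : SimpleGraph V} (E : PlaneEmbedding G)
    (σ : ZMod (Nat.card V) ≃ V) (F : Set (ℝ × ℝ)) (i : ZMod (Nat.card V)) : Prop :=
  E.VertexOnFace (σ i) F ∧ E.VertexOnFace (σ (i + 1)) F ∧ ¬ G.Adj (σ i) (σ (i + 1))

/-- A separating triangle: a triangle whose removal disconnects the graph. -/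
def SimpleGraph.IsSepTriangle {V : Type u} (G : SimpleGraph V) (a b c : V) : Prop :=
  G.Adj a b ∧ G.Adj b c ∧ G.Adj a c ∧
    ¬ (G.induce {v : V | v ≠ a ∧ v ≠ b ∧ v ≠ c}).Connected

section Triangle

variable {V : Type u} {G : SimpleGraph V} (E : PlaneEmbedding G) {a b c : V}

/-- The Jordan curve formed by the drawing of the triangle `a b c`. -/
def triangleDrawing (hab : G.Adj a b) (hbc : G.Adj b c) (hac : G.Adj a c) :
    Set (ℝ × ℝ) :=
  E.arc hab ∪ E.arc hbc ∪ E.arc hac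

/-- The vertices strictly inside the triangle `a b c` (bounded side of the Jordan curve). -/
def insideTriangle (hab : G.Adj a b) (hbc : G.Adj b c) (hac : G.Adj a c) : Set V :=
  {v | v ≠ a ∧ v ≠ b ∧ v ≠ c ∧
    Bornology.IsBounded
      (connectedComponentIn (triangleDrawing E hab hbc hac)ᶜ (E.pos v))}

/-- The vertices strictly outside the triangle `a b c` (unbounded side of the Jordan curve). -/
def outsideTriangle (hab : G.Adj a b) (hbc : G.Adj b c) (hac : G.Adj a c) : Set V :=
  {v | v ≠ a ∧ v ≠ b ∧ v ≠ c ∧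
    ¬ Bornology.IsBounded
      (connectedComponentIn (triangleDrawing E hab hbc hac)ᶜ (E.pos v))}

end Triangle

theorem stn_exists_log {A : Type*} [TopologicalSpace A] [SimplyConnectedSpace A]
    [LocallyPathConnectedSpace A] (f : A → ℂ) (hf : Continuous f) (h0 : ∀ x, f x ≠ 0) :
    ∃ g : A → ℂ, Continuous g ∧ ∀ x, Complex.exp (g x) = f x := by
  obtain ⟨a⟩ : Nonempty A := inferInstance
  rcases Complex.isCoveringMapOn_exp.existsUnique_continuousMap_lifts
    ⟨f, hf⟩ (Complex.exp_log (h0 a)) (fun x ↦ h0 x) with ⟨g, ⟨-, hg⟩, -⟩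
  exact ⟨g, g.continuous, fun x => congrFun hg x⟩

theorem stn_log_unique {A : Type*} [TopologicalSpace A] [PreconnectedSpace A]
    (f g : A → ℂ) (hf : Continuous f) (hg : Continuous g)
    (h : ∀ x, Complex.exp (f x) = Complex.exp (g x)) (x y : A) :
    f x - f y = g x - g y := by
  have := Complex.isCoveringMap_exp.eq_of_comp_eq (g₁ := f) (g₂ := fun x => g x + (f y - g y))
    hf (by fun_prop) (by
      funext z
      apply Subtype.ext
      simp [Complex.exp_add, Complex.exp_sub, h, Complex.exp_ne_zero]) y (by simp)
  have := congrFun this x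
  rw [this]; ring

noncomputable def stnPhi : (ℝ × ℝ) ≃L[ℝ] ℂ := Complex.equivRealProdCLM.symm

theorem stnPhi_sub_ne {x y : ℝ × ℝ} (h : x ≠ y) : stnPhi x - stnPhi y ≠ 0 :=
  sub_ne_zero.2 (fun e => h (stnPhi.injective e))

def stnSgn {n : ℕ} (i j : Fin n) : ℤ := if j < i then 1 else -1

theorem stn_vk {n : ℕ} (P : Fin n → ℝ × ℝ) (hP : Function.Injective P)
    (D : Fin n → Fin n → Prop) (S : Fin n → Fin n → Set (ℝ × ℝ))
    (hJ : ∀ i j, D i j → JoinedIn (S i j) (P i) (P j))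
    (hS : ∀ i j k l, D i j → D k l → i ≠ k → i ≠ l → j ≠ k → j ≠ l → Disjoint (S i j) (S k l)) :
    ∃ N : Fin n → Fin n → Fin n → ℤ, ∀ i j k l, D i j → D k l → i ≠ k → i ≠ l → j ≠ k → j ≠ l →
      stnSgn k j + stnSgn i k + stnSgn l i + stnSgn j l
        + 2 * (N i j k + N k l j - N k l i - N i j l) = 0 := by
  classical
  have h1 : ∀ i j, ∃ γ : ℝ → ℝ × ℝ, Continuous γ ∧ (D i j → γ 0 = P i ∧ γ 1 = P j ∧
      ∀ t, γ t ∈ S i j) := by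
    intro i j
    by_cases h : D i j
    · obtain ⟨p, hp⟩ := hJ i j h
      refine ⟨p.extend, p.continuous_extend, fun _ => ⟨by simp, by simp, fun t => ?_⟩⟩
      exact hp _
    · exact ⟨fun _ => 0, continuous_const, fun h' => absurd h' h⟩
  choose γ hγc hγ using h1
  have h2 : ∃ l : Fin n → Fin n → ℂ, (∀ i j, i ≠ j → Complex.exp (l i j) = stnPhi (P j) - stnPhi (P i))
      ∧ ∀ i j, i ≠ j → l i j - l j i = Real.pi * Complex.I * (stnSgn i j) := by
    refine ⟨fun i j => if j < i then Complex.log (stnPhi (P i) - stnPhi (P j)) + Real.pi * Complex.I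
      else Complex.log (stnPhi (P j) - stnPhi (P i)), ?_, ?_⟩
    · intro i j hij
      have n1 := stnPhi_sub_ne (hP.ne hij)
      have n2 := stnPhi_sub_ne (hP.ne hij.symm)
      dsimp only
      split_ifs with h
      · rw [Complex.exp_add, Complex.exp_log n1, Complex.exp_pi_mul_I]; ring
      · rw [Complex.exp_log n2]
    · intro i j hij
      rcases lt_or_gt_of_ne hij with h | h
      · simp [stnSgn, h, h.not_gt]
      · simp [stnSgn, h, h.not_gt]
  obtain ⟨l, hl, hl'⟩ := h2
  have h3 : ∀ i j k, ∃ N : ℤ, D i j → k ≠ i → k ≠ j → ∀ L : ℝ → ℂ, Continuous L →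
      (∀ t, Complex.exp (L t) = stnPhi (γ i j t) - stnPhi (P k)) →
      L 1 - L 0 = l k j - l k i + N * (2 * Real.pi * Complex.I) := by
    intro i j k
    by_cases h : D i j ∧ k ≠ i ∧ k ≠ j ∧ ∃ L : ℝ → ℂ, Continuous L ∧
      (∀ t, Complex.exp (L t) = stnPhi (γ i j t) - stnPhi (P k))
    · obtain ⟨hD, hi, hj, L, hL, hLe⟩ := h
      have : Complex.exp (L 1 - L 0) = Complex.exp (l k j - l k i) := by
        rw [Complex.exp_sub, Complex.exp_sub, hLe, hLe, hl _ _ hi, hl _ _ hj, (hγ i j hD).1,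
          (hγ i j hD).2.1]
      obtain ⟨N, hN⟩ := Complex.exp_eq_exp_iff_exists_int.1 this
      refine ⟨N, fun _ _ _ L' hL' hLe' => ?_⟩
      rw [← hN]
      exact stn_log_unique _ _ hL' hL (fun x => by rw [hLe, hLe']) _ _
    · refine ⟨0, fun a b c L hL hLe => absurd ⟨a, b, c, L, hL, hLe⟩ h⟩
  choose N hN using h3
  refine ⟨N, fun i j k m hij hkm h1 h2 h3 h4 => ?_⟩
  obtain ⟨M, hMc, hM⟩ := stn_exists_log (A := ℝ × ℝ)
    (fun x => stnPhi (γ i j x.1) - stnPhi (γ k m x.2)) (by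
      have := hγc i j
      have := hγc k m
      fun_prop) (fun x => stnPhi_sub_ne (fun e =>
        (hS i j k m hij hkm h1 h2 h3 h4).le_bot
          ⟨(hγ i j hij).2.2 x.1, e ▸ (hγ k m hkm).2.2 x.2⟩))
  obtain ⟨a0, a1, -⟩ := hγ i j hij
  obtain ⟨b0, b1, -⟩ := hγ k m hkm
  have e1 := hN i j k hij h1.symm h3.symm (fun t => M (t, 0)) (by fun_prop)
    (fun t => by rw [hM, b0])
  have e2 := hN i j m hij h2.symm h4.symm (fun t => M (t, 1)) (by fun_prop)
    (fun t => by rw [hM, b1])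
  have e3 := hN k m i hkm h1 h2 (fun t => M (0, t) + Real.pi * Complex.I) (by fun_prop)
    (fun t => by rw [Complex.exp_add, hM, a0, Complex.exp_pi_mul_I]; ring)
  have e4 := hN k m j hkm h3 h4 (fun t => M (1, t) + Real.pi * Complex.I) (by fun_prop)
    (fun t => by rw [Complex.exp_add, hM, a1, Complex.exp_pi_mul_I]; ring)
  have f1 := hl' k j h3.symm
  have f2 := hl' i k h1
  have f3 := hl' m i h2.symm
  have f4 := hl' j m h4
  have hpi : (Real.pi * Complex.I : ℂ) ≠ 0 := by simp [Real.pi_ne_zero]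
  have key : (Real.pi * Complex.I : ℂ) * ((stnSgn k j + stnSgn i k + stnSgn m i + stnSgn j m
        + 2 * (N i j k + N k m j - N k m i - N i j m) : ℤ) : ℂ) = 0 := by
    push_cast
    linear_combination -e1 + e2 + e3 - e4 - f1 - f2 - f3 - f4
  have := (mul_eq_zero.1 key).resolve_left hpi
  exact_mod_cast this

theorem stn_K5 (P : Fin 5 → ℝ × ℝ) (hP : Function.Injective P)
    (S : Fin 5 → Fin 5 → Set (ℝ × ℝ))
    (hJ : ∀ i j, i < j → JoinedIn (S i j) (P i) (P j))
    (hS : ∀ i j k l, i < j → k < l → i < k → j ≠ k → j ≠ l → Disjoint (S i j) (S k l)) :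
    False := by
  obtain ⟨N, hN⟩ := stn_vk P hP (fun i j => i < j) S hJ (fun i j k l h1 h2 h3 h4 h5 h6 => by
    rcases lt_or_gt_of_ne h3 with h | h
    · exact hS i j k l h1 h2 h h5 h6
    · exact (hS k l i j h2 h1 h (Ne.symm h4) (Ne.symm h6)).symm)
  have a1 := hN 0 1 2 3 (by decide) (by decide) (by decide) (by decide) (by decide) (by decide)
  have a2 := hN 0 1 2 4 (by decide) (by decide) (by decide) (by decide) (by decide) (by decide)
  have a3 := hN 0 1 3 4 (by decide) (by decide) (by decide) (by decide) (by decide) (by decide)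
  have a4 := hN 0 2 1 3 (by decide) (by decide) (by decide) (by decide) (by decide) (by decide)
  have a5 := hN 0 2 1 4 (by decide) (by decide) (by decide) (by decide) (by decide) (by decide)
  have a6 := hN 0 2 3 4 (by decide) (by decide) (by decide) (by decide) (by decide) (by decide)
  have a7 := hN 0 3 1 2 (by decide) (by decide) (by decide) (by decide) (by decide) (by decide)
  have a8 := hN 0 3 1 4 (by decide) (by decide) (by decide) (by decide) (by decide) (by decide)
  have a9 := hN 0 3 2 4 (by decide) (by decide) (by decide) (by decide) (by decide) (by decide)
  have b1 := hN 0 4 1 2 (by decide) (by decide) (by decide) (by decide) (by decide) (by decide)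
  have b2 := hN 0 4 1 3 (by decide) (by decide) (by decide) (by decide) (by decide) (by decide)
  have b3 := hN 0 4 2 3 (by decide) (by decide) (by decide) (by decide) (by decide) (by decide)
  have b4 := hN 1 2 3 4 (by decide) (by decide) (by decide) (by decide) (by decide) (by decide)
  have b5 := hN 1 3 2 4 (by decide) (by decide) (by decide) (by decide) (by decide) (by decide)
  have b6 := hN 1 4 2 3 (by decide) (by decide) (by decide) (by decide) (by decide) (by decide)
  clear hN
  simp +decide only [stnSgn, if_true, if_false] at a1 a2 a3 a4 a5 a6 a7 a8 a9 b1 b2 b3 b4 b5 b6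
  omega

theorem stn_K33 (P : Fin 6 → ℝ × ℝ) (hP : Function.Injective P)
    (S : Fin 6 → Fin 6 → Set (ℝ × ℝ))
    (hJ : ∀ i j, i < 3 → 3 ≤ j → JoinedIn (S i j) (P i) (P j))
    (hS : ∀ i j k l, i < 3 → 3 ≤ j → k < 3 → 3 ≤ l → i ≠ k → j < l →
      Disjoint (S i j) (S k l)) :
    False := by
  obtain ⟨N, hN⟩ := stn_vk P hP (fun i j => i < 3 ∧ 3 ≤ j) S (fun i j h => hJ i j h.1 h.2)
   (fun i j k l h1 h2 h3 h4 h5 h6 => by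
    rcases lt_or_gt_of_ne h6 with h | h
    · exact hS i j k l h1.1 h1.2 h2.1 h2.2 h3 h
    · exact (hS k l i j h2.1 h2.2 h1.1 h1.2 (Ne.symm h3) h).symm)
  have H : ∀ i j k l : Fin 6, i < 3 ∧ 3 ≤ j ∧ k < 3 ∧ 3 ≤ l ∧ i < k ∧ j ≠ l →
    (if j < l then 1 else 0) = (N i j k + N k l j + N k l i + N i j l) % 2 := by
    intro i j k l ⟨h1, h2, h3, h4, h5, h6⟩
    have := hN i j k l ⟨h1, h2⟩ ⟨h3, h4⟩ h5.ne (h1.trans_le h4).ne (h3.trans_le h2).ne' h6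
    have q1 : ¬ j < k := (h3.trans_le h2).not_gt
    have q2 : i < l := (h1.trans_le h4)
    simp only [stnSgn, q1, q2, h5.not_gt, if_true, if_false] at this
    split_ifs at this ⊢ with q3 q4 q5
    all_goals omega
  clear hN
  have a1 := H 0 3 1 4 (by decide)
  have a2 := H 0 3 1 5 (by decide)
  have a3 := H 0 4 1 3 (by decide)
  have a4 := H 0 4 1 5 (by decide)
  have a5 := H 0 5 1 3 (by decide)
  have a6 := H 0 5 1 4 (by decide)
  have b1 := H 0 3 2 4 (by decide)
  have b2 := H 0 3 2 5 (by decide)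
  have b3 := H 0 4 2 3 (by decide)
  have b4 := H 0 4 2 5 (by decide)
  have b5 := H 0 5 2 3 (by decide)
  have b6 := H 0 5 2 4 (by decide)
  have c1 := H 1 3 2 4 (by decide)
  have c2 := H 1 3 2 5 (by decide)
  have c3 := H 1 4 2 3 (by decide)
  have c4 := H 1 4 2 5 (by decide)
  have c5 := H 1 5 2 3 (by decide)
  have c6 := H 1 5 2 4 (by decide)
  clear H
  simp +decide only [if_true, if_false] at a1 a2 a3 a4 a5 a6 b1 b2 b3 b4 b5 b6 c1 c2 c3 c4 c5 c6
  omega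

theorem stn_frontier_comp {K : Set (ℝ × ℝ)} (hK : IsClosed K) (p : ℝ × ℝ) :
    frontier (connectedComponentIn Kᶜ p) ⊆ K := by
  intro z hz
  by_contra hzK
  have ho : IsOpen (connectedComponentIn Kᶜ p) := hK.isOpen_compl.connectedComponentIn
  have ho' : IsOpen (connectedComponentIn Kᶜ z) := hK.isOpen_compl.connectedComponentIn
  rw [ho.frontier_eq] at hz
  obtain ⟨w, hw1, hw2⟩ := mem_closure_iff.1 hz.1 _ ho' (mem_connectedComponentIn hzK)
  apply hz.2
  rw [connectedComponentIn_eq hw2, ← connectedComponentIn_eq hw1]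
  exact mem_connectedComponentIn hzK

theorem stn_bdd_no_log {K : Set (ℝ × ℝ)} (hK : IsClosed K) (p : ℝ × ℝ) (hp : p ∉ K)
    (hb : Bornology.IsBounded (connectedComponentIn Kᶜ p)) (g : ℝ × ℝ → ℂ)
    (hg : ContinuousOn g K) (hge : ∀ z ∈ K, Complex.exp (g z) = stnPhi z - stnPhi p) : False := by
  classical
  obtain ⟨g', hg'⟩ := ContinuousMap.exists_restrict_eq hK (⟨K.domRestrict g, continuousOn_iff_continuous_domRestrict.1 hg⟩ : C(K, ℂ))
  have hg'' : ∀ z ∈ K, g' z = g z := fun z hz => by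
    have := congrArg (fun f : C(K, ℂ) => f ⟨z, hz⟩) hg'
    simpa using this
  set C := connectedComponentIn Kᶜ p with hC
  have hpC : p ∈ C := mem_connectedComponentIn hp
  let h : ℝ × ℝ → ℂ := C.piecewise (fun z => Complex.exp (g' z)) (fun z => stnPhi z - stnPhi p)
  have hc : Continuous h := by
    apply Continuous.piecewise
    · intro a ha
      have := stn_frontier_comp hK p ha
      simp only [hg'' a this, hge a this]
    · fun_prop
    · fun_prop
  have h0 : ∀ x, h x ≠ 0 := by
    intro x
    by_cases hx : x ∈ C
    · simp [h, hx, Complex.exp_ne_zero]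
    · simp only [h, hx, not_false_eq_true, piecewise_eq_of_notMem]
      exact stnPhi_sub_ne (fun e => hx (e ▸ hpC))
  obtain ⟨G, hGc, hG⟩ := stn_exists_log h hc h0
  have hb' : Bornology.IsBounded (stnPhi '' C) :=
    (stnPhi : (ℝ × ℝ) →L[ℝ] ℂ).lipschitz.isBounded_image hb
  obtain ⟨ρ, hρ⟩ := hb'.subset_ball (stnPhi p)
  have hρ0 : 0 < ρ := by
    have := hρ (mem_image_of_mem _ hpC)
    simpa using this
  let z : ℝ → ℝ × ℝ := fun t => stnPhi.symm (stnPhi p + Complex.exp (Real.log ρ + t * Complex.I))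
  have hz : ∀ t, stnPhi (z t) = stnPhi p + Complex.exp (Real.log ρ + t * Complex.I) := by
    intro t; simp [z]
  have hzC : ∀ t, z t ∉ C := by
    intro t ht
    have := hρ (mem_image_of_mem _ ht)
    rw [hz, Metric.mem_ball, dist_eq_norm, add_sub_cancel_left, Complex.norm_exp] at this
    simp [Real.exp_log hρ0] at this
  have key := stn_log_unique (fun t : ℝ => G (z t)) (fun t : ℝ => Real.log ρ + t * Complex.I)
    (by fun_prop) (by fun_prop) (fun t => by
      rw [hG]; simp only [h, hzC t, not_false_eq_true, piecewise_eq_of_notMem]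
      rw [hz]; ring) (2 * Real.pi) 0
  have e : z (2 * Real.pi) = z 0 := by
    simp only [z]
    congr 2
    rw [Complex.exp_eq_exp_iff_exists_int]
    exact ⟨1, by push_cast; ring⟩
  simp only [e] at key
  have : (2 * Real.pi * Complex.I : ℂ) = 0 := by
    push_cast at key
    linear_combination -key
  simp [Real.pi_ne_zero] at this

/-- simple arc -/
def StnArc (J : Set (ℝ × ℝ)) : Prop :=
  ∃ f : ℝ → ℝ × ℝ, ContinuousOn f (Set.Icc 0 1) ∧ Set.InjOn f (Set.Icc 0 1) ∧ f '' Set.Icc 0 1 = J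

theorem StnArc.isCompact {J : Set (ℝ × ℝ)} (h : StnArc J) : IsCompact J := by
  obtain ⟨f, h1, h2, rfl⟩ := h
  exact isCompact_Icc.image_of_continuousOn h1

theorem StnArc.log {J : Set (ℝ × ℝ)} (h : StnArc J) (F : ℝ × ℝ → ℂ) (hF : Continuous F)
    (h0 : ∀ z ∈ J, F z ≠ 0) : ∃ g : ℝ × ℝ → ℂ, Continuous g ∧ ∀ z ∈ J, Complex.exp (g z) = F z := by
  obtain ⟨f, h1, h2, rfl⟩ := h
  have hc : Continuous ((Icc (0:ℝ) 1).domRestrict f) := continuousOn_iff_continuous_domRestrict.1 h1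
  have hinj : Function.Injective ((Icc (0:ℝ) 1).domRestrict f) := injOn_iff_injective.1 h2
  have hemb := hc.isClosedEmbedding hinj
  obtain ⟨G, hGc, hG⟩ := stn_exists_log (A := ℝ)
    (fun t => F ((Icc (0:ℝ) 1).domRestrict f (projIcc 0 1 zero_le_one t)))
    (hF.comp (hc.comp continuous_projIcc)) (fun t => h0 _ ⟨_, (projIcc 0 1 zero_le_one t).2, rfl⟩)
  obtain ⟨g, hg⟩ := ContinuousMap.exists_extension' hemb (⟨fun t => G t, by fun_prop⟩ : C(Icc (0:ℝ) 1, ℂ))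
  refine ⟨g, g.continuous, ?_⟩
  rintro _ ⟨t, ht, rfl⟩
  have e : g (f t) = G t := congrFun hg ⟨t, ht⟩
  rw [e, hG]
  simp [projIcc_of_mem zero_le_one ht]

theorem stn_two_arcs {J K : Set (ℝ × ℝ)} (hJ : StnArc J) (hK : StnArc K) (c : ℝ × ℝ)
    (hcJ : c ∈ J) (hcK : c ∈ K) (hc : J ∩ K ⊆ {c}) (p : ℝ × ℝ) (hp : p ∉ J ∪ K) :
    ¬ Bornology.IsBounded (connectedComponentIn (J ∪ K)ᶜ p) := by
  classical
  intro hb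
  have hF : Continuous (fun z => stnPhi z - stnPhi p) := by fun_prop
  obtain ⟨g1, c1, e1⟩ := hJ.log _ hF (fun z hz => stnPhi_sub_ne (fun e => hp (Or.inl (e ▸ hz))))
  obtain ⟨g2, c2, e2⟩ := hK.log _ hF (fun z hz => stnPhi_sub_ne (fun e => hp (Or.inr (e ▸ hz))))
  have E : ∀ z ∈ K, J.piecewise g1 (fun z => g2 z + (g1 c - g2 c)) z = g2 z + (g1 c - g2 c) := by
    intro z hz
    by_cases h : z ∈ J
    · have : z = c := hc ⟨h, hz⟩
      subst this
      simp [h]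
    · simp [h]
  refine stn_bdd_no_log (hJ.isCompact.isClosed.union hK.isCompact.isClosed) p hp hb
    (J.piecewise g1 (fun z => g2 z + (g1 c - g2 c))) ?_ ?_
  · apply ContinuousOn.union_of_isClosed _ _ hJ.isCompact.isClosed hK.isCompact.isClosed
    · exact c1.continuousOn.congr (fun z hz => by simp [hz])
    · refine ContinuousOn.congr (f := fun z => g2 z + (g1 c - g2 c)) (by fun_prop) E
  · rintro z (hz | hz)
    · simp [hz, e1 z hz]
    · rw [E z hz, Complex.exp_add, e2 z hz, Complex.exp_sub, e1 c hcJ, e2 c hcK, div_self, mul_one]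
      exact stnPhi_sub_ne (fun e => hp (Or.inl (e ▸ hcJ)))

theorem stn_ext_conn (R : ℝ) (hR : 0 ≤ R) : IsPreconnected {z : ℝ × ℝ | R < ‖z‖} := by
  have h1 : IsPreconnected ({0}ᶜ : Set (ℝ × ℝ)) :=
    (isConnected_compl_singleton_of_one_lt_rank (by simp; norm_num) 0).isPreconnected
  have h2 := h1.image (fun z => (1 + R * ‖z‖⁻¹) • z) (by
    intro x hx
    have hx : ‖x‖ ≠ 0 := by simpa using hx
    apply ContinuousAt.continuousWithinAt
    fun_prop (disch := assumption))
  convert h2 using 1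
  ext z
  constructor
  · intro hz
    have hz : R < ‖z‖ := hz
    have hz0 : 0 < ‖z‖ := hR.trans_lt hz
    have hpos : 0 < 1 - R * ‖z‖⁻¹ := by
      have : R * ‖z‖⁻¹ < 1 := by rw [← div_eq_mul_inv, div_lt_one hz0]; exact hz
      linarith
    refine ⟨(1 - R * ‖z‖⁻¹) • z, ?_, ?_⟩
    · simp only [mem_compl_iff, mem_singleton_iff, smul_eq_zero, not_or]
      exact ⟨hpos.ne', norm_pos_iff.1 hz0⟩
    · simp only
      rw [norm_smul, smul_smul, Real.norm_of_nonneg hpos.le]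
      have : (1 - R * ‖z‖⁻¹) * ‖z‖ = ‖z‖ - R := by field_simp
      rw [this]
      have h3 : ‖z‖ - R ≠ 0 := by linarith
      have : (1 + R * (‖z‖ - R)⁻¹) * (1 - R * ‖z‖⁻¹) = 1 := by field_simp; ring
      rw [this, one_smul]
  · rintro ⟨w, hw, rfl⟩
    have hw : 0 < ‖w‖ := by simpa using hw
    simp only [mem_ofPred_eq]
    rw [norm_smul, Real.norm_of_nonneg (by positivity)]
    have : (1 + R * ‖w‖⁻¹) * ‖w‖ = ‖w‖ + R := by field_simp
    rw [this]; linarith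

theorem stn_far {K : Set (ℝ × ℝ)} (hK : Bornology.IsBounded K) :
    ∃ R, 0 ≤ R ∧ {z : ℝ × ℝ | R < ‖z‖} ⊆ Kᶜ := by
  obtain ⟨R, hR⟩ := hK.subset_closedBall 0
  refine ⟨max R 0, le_max_right _ _, fun z hz hzK => ?_⟩
  have := hR hzK
  simp only [mem_closedBall_zero_iff] at this
  have hz : max R 0 < ‖z‖ := hz
  exact absurd hz (not_lt.2 (this.trans (le_max_left _ _)))

theorem stn_unbdd_far (R : ℝ) {C : Set (ℝ × ℝ)} (h : ¬ Bornology.IsBounded C) :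
    ∃ z ∈ C, R < ‖z‖ := by
  by_contra! H
  exact h ((Metric.isBounded_closedBall (x := 0) (r := R)).subset (fun z hz => by simpa using H z hz))

theorem stn_unbdd_eq {K : Set (ℝ × ℝ)} (hK : Bornology.IsBounded K) (x y : ℝ × ℝ)
    (hx : ¬ Bornology.IsBounded (connectedComponentIn Kᶜ x))
    (hy : ¬ Bornology.IsBounded (connectedComponentIn Kᶜ y)) :
    connectedComponentIn Kᶜ x = connectedComponentIn Kᶜ y := by
  obtain ⟨R, hR, hRK⟩ := stn_far hK
  obtain ⟨x', hx', hx2⟩ := stn_unbdd_far R hx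
  obtain ⟨y', hy', hy2⟩ := stn_unbdd_far R hy
  rw [connectedComponentIn_eq hx', connectedComponentIn_eq hy']
  exact connectedComponentIn_eq ((stn_ext_conn R hR).subset_connectedComponentIn hx2 hRK hy2)

theorem stn_exists_far {K : Set (ℝ × ℝ)} (hK : Bornology.IsBounded K) :
    ∃ r, r ∉ K ∧ ∀ L ⊆ K, ¬ Bornology.IsBounded (connectedComponentIn Lᶜ r) := by
  obtain ⟨R, hR, hRK⟩ := stn_far hK
  have hu : ¬ Bornology.IsBounded {z : ℝ × ℝ | R < ‖z‖} := by
    intro hb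
    obtain ⟨M, hM0, hM⟩ := hb.exists_pos_norm_le
    have h1 : ‖((R + M + 1, 0) : ℝ × ℝ)‖ = R + M + 1 := by
      rw [Prod.norm_def]
      simp only [norm_zero, Real.norm_eq_abs]
      rw [abs_of_nonneg (by positivity), max_eq_left (by positivity)]
    have := hM (R + M + 1, 0) (by rw [mem_ofPred_eq, h1]; linarith)
    rw [h1] at this
    linarith
  have hr : R < ‖((R + 1, 0) : ℝ × ℝ)‖ := by
    refine lt_of_lt_of_le ?_ (norm_fst_le _)
    simp only [Real.norm_eq_abs]
    exact lt_of_lt_of_le (by linarith) (le_abs_self _)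
  refine ⟨(R + 1, 0), hRK hr, fun L hL hb => hu (hb.subset ?_)⟩
  exact (stn_ext_conn R hR).subset_connectedComponentIn hr (hRK.trans (compl_subset_compl.2 hL))

theorem stn_joined {K : Set (ℝ × ℝ)} (hK : IsClosed K) {x y : ℝ × ℝ}
    (hx : x ∉ K) (hy : y ∉ K) (h : connectedComponentIn Kᶜ x = connectedComponentIn Kᶜ y) :
    JoinedIn (connectedComponentIn Kᶜ x) x y := by
  have ho : IsOpen (connectedComponentIn Kᶜ x) := hK.isOpen_compl.connectedComponentIn
  have hc : IsConnected (connectedComponentIn Kᶜ x) := isConnected_connectedComponentIn_iff.2 hx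
  have hp : IsPathConnected (connectedComponentIn Kᶜ x) := ho.isConnected_iff_isPathConnected.1 hc
  exact hp.joinedIn x (mem_connectedComponentIn hx) y (h ▸ mem_connectedComponentIn hy)

theorem stn_first_hit {T S : Set (ℝ × ℝ)} (hT : IsClosed T) {r p : ℝ × ℝ}
    (h : JoinedIn S r p) (hr : r ∉ T) (hp : p ∉ connectedComponentIn Tᶜ r) :
    ∃ x ∈ S ∩ T, JoinedIn (connectedComponentIn Tᶜ r ∪ {x}) r x := by
  obtain ⟨γ, hγ⟩ := h
  have hc : Continuous γ.extend := γ.continuous_extend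
  let Z : Set ℝ := Icc 0 1 ∩ γ.extend ⁻¹' T
  have hZc : IsCompact Z := isCompact_Icc.inter_right (hT.preimage hc)
  have hZ : Z.Nonempty := by
    by_contra hne
    rw [not_nonempty_iff_eq_empty] at hne
    apply hp
    have hpc : IsPreconnected (γ.extend '' Icc 0 1) := isPreconnected_Icc.image _ hc.continuousOn
    refine hpc.subset_connectedComponentIn ⟨0, by simp, by simp⟩ ?_ ⟨1, by simp, by simp⟩
    rintro _ ⟨t, ht, rfl⟩ hT'
    have : t ∈ Z := ⟨ht, hT'⟩
    rw [hne] at this; exact this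
  obtain ⟨t0, ht0, hmin⟩ := hZc.exists_isLeast hZ
  refine ⟨γ.extend t0, ⟨hγ _, ht0.2⟩, ?_⟩
  have h00 : 0 ≤ t0 := ht0.1.1
  have h01 : t0 ≤ 1 := ht0.1.2
  have hpc : IsPreconnected (γ.extend '' Ico 0 t0) := isPreconnected_Ico.image _ hc.continuousOn
  have hsub : γ.extend '' Ico 0 t0 ⊆ Tᶜ := by
    rintro _ ⟨t, ht, rfl⟩ hT'
    exact absurd (hmin ⟨⟨ht.1, ht.2.le.trans h01⟩, hT'⟩) (not_le.2 ht.2)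
  have ht0' : 0 < t0 := by
    rcases h00.eq_or_lt with e | e
    · exfalso; apply hr
      have := ht0.2
      rw [← e] at this
      simpa using this
    · exact e
  have hsub2 := hpc.subset_connectedComponentIn (x := r) ⟨0, ⟨le_rfl, ht0'⟩, by simp⟩ hsub
  apply JoinedIn.ofLine (f := fun s => γ.extend (s * t0))
  · exact (by fun_prop : Continuous fun s => γ.extend (s * t0)).continuousOn
  · simp
  · simp
  · rintro _ ⟨s, hs, rfl⟩
    rcases hs.2.eq_or_lt with e | e
    · right; simp [e]
    · left; apply hsub2; exact ⟨_, ⟨mul_nonneg hs.1 h00, by nlinarith⟩, rfl⟩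

structure StnComp {V : Type u} (G : SimpleGraph V) (a b c : V) (C : Set V) : Prop where
  ne : C.Nonempty
  sub : ∀ v ∈ C, v ≠ a ∧ v ≠ b ∧ v ≠ c
  closed : ∀ u ∈ C, ∀ v, G.Adj u v → v ≠ a → v ≠ b → v ≠ c → v ∈ C
  conn : ∀ P : V → Prop, ∀ x ∈ C, P x → (∀ u ∈ C, ∀ v ∈ C, G.Adj u v → P u → P v) → ∀ v ∈ C, P v

theorem StnComp.rot {V : Type u} {G : SimpleGraph V} {a b c : V} {C : Set V}
    (h : StnComp G a b c C) : StnComp G b c a C :=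
  ⟨h.ne, fun v hv => ⟨(h.sub v hv).2.1, (h.sub v hv).2.2, (h.sub v hv).1⟩,
    fun u hu v huv h1 h2 h3 => h.closed u hu v huv h3 h1 h2, h.conn⟩

theorem stn_reach {V : Type u} {G : SimpleGraph V} {S : Set V} (P : V → Prop)
    (hP : ∀ u ∈ S, ∀ v ∈ S, G.Adj u v → P u → P v) {x y : S}
    (h : (G.induce S).Reachable x y) (hx : P x) : P y := by
  obtain ⟨w⟩ := h
  induction w with
  | nil => exact hx
  | cons h p ih => exact ih (hP _ (Subtype.coe_prop _) _ (Subtype.coe_prop _) h hx)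

theorem stn_comp_of {V : Type u} (G : SimpleGraph V) (a b c : V)
    (p : {v : V | v ≠ a ∧ v ≠ b ∧ v ≠ c}) :
    StnComp G a b c {v | ∃ hv : v ≠ a ∧ v ≠ b ∧ v ≠ c,
      (G.induce {v : V | v ≠ a ∧ v ≠ b ∧ v ≠ c}).Reachable p ⟨v, hv⟩} := by
  refine ⟨⟨p, p.2, SimpleGraph.Reachable.refl _⟩, fun v hv => hv.1, ?_, ?_⟩
  · rintro u ⟨hu, hr⟩ v huv h1 h2 h3
    refine ⟨⟨h1, h2, h3⟩, hr.trans (SimpleGraph.Adj.reachable ?_)⟩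
    exact huv
  · rintro P x ⟨hx, hxr⟩ hPx hP v ⟨hv, hvr⟩
    have h1 := hxr.symm.trans hvr
    have := stn_reach (G := G) (fun v => P v ∧ ∃ hv : v ≠ a ∧ v ≠ b ∧ v ≠ c,
      (G.induce {v : V | v ≠ a ∧ v ≠ b ∧ v ≠ c}).Reachable p ⟨v, hv⟩) ?_ h1 ⟨hPx, hx, hxr⟩
    · exact this.1
    · rintro u hu v hv huv ⟨hPu, hu', hur⟩
      have hvr : ∃ hv : v ≠ a ∧ v ≠ b ∧ v ≠ c,
          (G.induce {v : V | v ≠ a ∧ v ≠ b ∧ v ≠ c}).Reachable p ⟨v, hv⟩ :=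
        ⟨hv, hur.trans (SimpleGraph.Adj.reachable huv)⟩
      exact ⟨hP u ⟨hu', hur⟩ v hvr huv hPu, hvr⟩

theorem stn_two_comps {V : Type u} (G : SimpleGraph V) (h3 : G.IsTriconnected) {a b c : V}
    (hT : G.IsSepTriangle a b c) :
    ∃ C₁ C₂ : Set V, StnComp G a b c C₁ ∧ StnComp G a b c C₂ ∧ Disjoint C₁ C₂ := by
  classical
  have hne : Nonempty {v : V | v ≠ a ∧ v ≠ b ∧ v ≠ c} := by
    by_contra hne
    have : (Set.univ : Set V) ⊆ (({a, b, c} : Finset V) : Set V) := by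
      intro v _
      by_contra hv
      apply hne
      refine ⟨⟨v, ?_⟩⟩
      simpa [not_or] using hv
    have h4 := Set.ncard_le_ncard this (Finset.finite_toSet _)
    rw [Set.ncard_univ, Set.ncard_coe_finset] at h4
    have := h3.1
    have := Finset.card_le_three (a := a) (b := b) (c := c)
    omega
  have h : ¬ (G.induce {v : V | v ≠ a ∧ v ≠ b ∧ v ≠ c}).Preconnected :=
    fun hp => hT.2.2.2 ⟨hp⟩
  unfold SimpleGraph.Preconnected at h
  push Not at h
  obtain ⟨p, q, hpq⟩ := h
  refine ⟨_, _, stn_comp_of G a b c p, stn_comp_of G a b c q, ?_⟩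
  rw [Set.disjoint_left]
  rintro v ⟨hv, h1⟩ ⟨_, h2⟩
  exact hpq (h1.trans h2.symm)

theorem StnComp.attach {V : Type u} {G : SimpleGraph V} {a b c : V} {C : Set V}
    (h3 : G.IsTriconnected) (hab : a ≠ b) (hac : a ≠ c)
    (h : StnComp G a b c C) : ∃ x ∈ C, G.Adj a x := by
  by_contra! H
  obtain ⟨p, hp⟩ := h.ne
  have hr := (h3.2.2 b c).preconnected ⟨p, (h.sub p hp).2⟩ ⟨a, hab, hac⟩
  have := stn_reach (G := G) (fun v => v ∈ C) ?_ hr hp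
  · exact (h.sub a this).1 rfl
  · intro u _ v hv huv hu
    refine h.closed u hu v huv ?_ hv.1 hv.2
    rintro rfl
    exact H u hu huv.symm

/-- if the neighbors of `a` and `b` in `C` are only `x` then so is that of `c` -/
theorem StnComp.third {V : Type u} {G : SimpleGraph V} {a b c : V} {C : Set V}
    (h3 : G.IsTriconnected) (hac : a ≠ c)
    (h : StnComp G a b c C) (x y : V) (hx : x ∈ C) (hy : y ∈ C)
    (ha : ∀ z ∈ C, G.Adj a z → z = x) (hb : ∀ z ∈ C, G.Adj b z → z = x)
    : y = x := by
  by_contra hyx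
  have hr := (h3.2.2 x c).preconnected ⟨y, hyx, (h.sub y hy).2.2⟩
    ⟨a, (h.sub x hx).1.symm, hac⟩
  have := stn_reach (G := G) (fun v => v ∈ C) ?_ hr hy
  · exact (h.sub a this).1 rfl
  · intro u hu' v hv huv hu
    refine h.closed u hu v huv ?_ ?_ hv.2
    · rintro rfl
      exact hu'.1 (ha u hu huv.symm)
    · rintro rfl
      exact hu'.1 (hb u hu huv.symm)

section StnTop

variable {V : Type u} {G : SimpleGraph V} (E : PlaneEmbedding G)

def stnD (C : Set V) (x : V) : Set (ℝ × ℝ) :=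
  {z | ∃ (u v : V) (h : G.Adj u v), u ∈ C ∧ (v ∈ C ∨ v = x) ∧ z ∈ E.arc h}

theorem stn_arc_joined {u v : V} (h : G.Adj u v) : JoinedIn (E.arc h) (E.pos u) (E.pos v) := by
  obtain ⟨f, hf, _, h0, h1, hi⟩ := E.arc_curve h
  exact JoinedIn.ofLine hf h0 h1 hi.le

theorem stn_arc_mem_left {u v : V} (h : G.Adj u v) : E.pos u ∈ E.arc h :=
  (stn_arc_joined E h).source_mem

theorem stn_arc_mem_right {u v : V} (h : G.Adj u v) : E.pos v ∈ E.arc h :=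
  (stn_arc_joined E h).target_mem

theorem stn_arc_arc {u v : V} (h : G.Adj u v) : StnArc (E.arc h) := by
  obtain ⟨f, hf, hi, h0, h1, he⟩ := E.arc_curve h
  exact ⟨f, hf, hi, he⟩

/-- a common point of two different edges is a common endpoint -/
theorem stn_common {u v w z : V} (h : G.Adj u v) (h' : G.Adj w z) (hne : s(u, v) ≠ s(w, z))
    {x : ℝ × ℝ} (h1 : x ∈ E.arc h) (h2 : x ∈ E.arc h') :
    ∃ y, x = E.pos y ∧ (y = u ∨ y = v) ∧ (y = w ∨ y = z) := by
  obtain ⟨p, q⟩ := E.arc_inter h h' hne ⟨h1, h2⟩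
  have inj := E.pos_inj
  rcases p with p | p
  · refine ⟨u, p, Or.inl rfl, ?_⟩
    rcases q with q | q
    · exact Or.inl (inj (p.symm.trans q))
    · exact Or.inr (inj (p.symm.trans q))
  · have p : x = E.pos v := p
    refine ⟨v, p, Or.inr rfl, ?_⟩
    rcases q with q | q
    · exact Or.inl (inj (p.symm.trans q))
    · exact Or.inr (inj (p.symm.trans q))

theorem stn_arc_disj {u v w z : V} (h : G.Adj u v) (h' : G.Adj w z)
    (h1 : u ≠ w) (h2 : u ≠ z) (h3 : v ≠ w) (h4 : v ≠ z) : Disjoint (E.arc h) (E.arc h') := by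
  rw [Set.disjoint_left]
  intro x hx hx'
  have hne : s(u, v) ≠ s(w, z) := by
    intro e
    rcases Sym2.eq_iff.1 e with e | e
    · exact h1 e.1
    · exact h2 e.1
  obtain ⟨y, -, h5, h6⟩ := stn_common E h h' hne hx hx'
  rcases h5 with rfl | rfl <;> rcases h6 with rfl | rfl <;> contradiction

theorem stn_half_arc {T : Set (ℝ × ℝ)} {u v : V} (h : G.Adj u v)
    (hT : ∀ z ∈ E.arc h, z ∈ T → z = E.pos v) :
    ∀ z ∈ E.arc h, z ≠ E.pos v → z ∈ connectedComponentIn Tᶜ (E.pos u) := by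
  obtain ⟨f, hf, hi, h0, h1, he⟩ := E.arc_curve h
  have hpc : IsPreconnected (f '' Ico 0 1) :=
    isPreconnected_Ico.image f (hf.mono Ico_subset_Icc_self)
  have hsub : f '' Ico 0 1 ⊆ Tᶜ := by
    rintro _ ⟨t, ht, rfl⟩ htT
    have h2 := hT (f t) (he ▸ ⟨t, Ico_subset_Icc_self ht, rfl⟩) htT
    rw [← h1] at h2
    have := hi (Ico_subset_Icc_self ht) (by simp) h2
    exact ht.2.ne this
  have := hpc.subset_connectedComponentIn (x := E.pos u) ⟨0, by simp, h0⟩ hsub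
  intro z hz hzv
  rw [← he] at hz
  obtain ⟨t, ht, rfl⟩ := hz
  refine this ⟨t, ⟨ht.1, lt_of_le_of_ne ht.2 ?_⟩, rfl⟩
  rintro rfl
  exact hzv h1

variable {a b c : V} {C C' : Set V}

theorem stnD_joined (hC : StnComp G a b c C) {t : V} (x : V) (hx : x ∈ C) (hxt : G.Adj t x) :
    ∀ v ∈ C, JoinedIn (stnD E C t) (E.pos v) (E.pos t) := by
  apply hC.conn (fun v => JoinedIn (stnD E C t) (E.pos v) (E.pos t)) x hx
  · exact (stn_arc_joined E hxt.symm).mono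
      (fun z hz => ⟨x, t, hxt.symm, hx, Or.inr rfl, hz⟩)
  · intro u hu v hv huv h
    refine JoinedIn.trans ((stn_arc_joined E huv.symm).mono ?_) h
    exact fun z hz => ⟨v, u, huv.symm, hv, Or.inl hu, hz⟩

theorem stnD_disj (hd : Disjoint C C') {s t : V} (hst : s ≠ t) (hs : s ∉ C') (ht : t ∉ C) :
    Disjoint (stnD E C s) (stnD E C' t) := by
  rw [Set.disjoint_left]
  rintro z ⟨u, v, h, hu, hv, hz⟩ ⟨u', v', h', hu', hv', hz'⟩
  have hd := Set.disjoint_left.1 hd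
  have e1 : u ≠ u' := by rintro rfl; exact hd hu hu'
  have e2 : u ≠ v' := by
    rintro rfl
    rcases hv' with q | rfl
    · exact hd hu q
    · exact ht hu
  have e3 : v ≠ u' := by
    rintro rfl
    rcases hv with q | rfl
    · exact hd q hu'
    · exact hs hu'
  have e4 : v ≠ v' := by
    rintro rfl
    rcases hv with q | rfl <;> rcases hv' with q' | rfl
    · exact hd q q'
    · exact ht q
    · exact hs q'
    · exact hst rfl
  exact (stn_arc_disj E h h' e1 e2 e3 e4).le_bot ⟨hz, hz'⟩

theorem stnD_arc {s x y : V} (h : G.Adj x y) (hx : x ∉ C) (hy : y ∉ C) :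
    ∀ z ∈ stnD E C s, z ∈ E.arc h → z = E.pos s ∧ (s = x ∨ s = y) := by
  rintro z ⟨u, v, h', hu, hv, hz⟩ hz'
  have hne : s(u, v) ≠ s(x, y) := by
    intro e
    rcases Sym2.eq_iff.1 e with e | e
    · exact hx (e.1 ▸ hu)
    · exact hy (e.1 ▸ hu)
  obtain ⟨w, rfl, h5, h6⟩ := stn_common E h' h hne hz hz'
  have hw : w ∉ C := by rcases h6 with rfl | rfl <;> assumption
  rcases h5 with rfl | rfl
  · exact absurd hu hw
  · rcases hv with q | rfl
    · exact absurd q hw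
    · exact ⟨rfl, h6⟩

theorem stn_tri_hit (hC : StnComp G a b c C) (hab : G.Adj a b) (hbc : G.Adj b c) (hac : G.Adj a c)
    {s : V} : ∀ z ∈ stnD E C s, z ∈ triangleDrawing E hab hbc hac → z = E.pos s ∧ s ∉ C := by
  have ha : a ∉ C := fun h => (hC.sub a h).1 rfl
  have hb : b ∉ C := fun h => (hC.sub b h).2.1 rfl
  have hc : c ∉ C := fun h => (hC.sub c h).2.2 rfl
  rintro z hz ((h | h) | h)
  · obtain ⟨e, h⟩ := stnD_arc E hab ha hb z hz h
    exact ⟨e, by rcases h with rfl | rfl <;> assumption⟩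
  · obtain ⟨e, h⟩ := stnD_arc E hbc hb hc z hz h
    exact ⟨e, by rcases h with rfl | rfl <;> assumption⟩
  · obtain ⟨e, h⟩ := stnD_arc E hac ha hc z hz h
    exact ⟨e, by rcases h with rfl | rfl <;> assumption⟩

theorem stn_pos_notMem (hC : StnComp G a b c C) (hab : G.Adj a b) (hbc : G.Adj b c)
    (hac : G.Adj a c) {p : V} (hp : p ∈ C) : E.pos p ∉ triangleDrawing E hab hbc hac := by
  have := hC.sub p hp
  rintro ((h | h) | h)
  all_goals
    rcases E.pos_arc _ p h with rfl | rfl <;> simp at this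

theorem stn_comp_eq (hC : StnComp G a b c C) (hab : G.Adj a b) (hbc : G.Adj b c) (hac : G.Adj a c)
    {p : V} (hp : p ∈ C) : ∀ v ∈ C, connectedComponentIn (triangleDrawing E hab hbc hac)ᶜ (E.pos v)
      = connectedComponentIn (triangleDrawing E hab hbc hac)ᶜ (E.pos p) := by
  apply hC.conn (fun v => connectedComponentIn (triangleDrawing E hab hbc hac)ᶜ (E.pos v)
      = connectedComponentIn (triangleDrawing E hab hbc hac)ᶜ (E.pos p)) p hp rfl
  intro u hu v hv huv h
  rw [← h]
  obtain ⟨f, hf, hi, h0, h1, he⟩ := E.arc_curve huv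
  have hpc : IsPreconnected (E.arc huv) := he ▸ isPreconnected_Icc.image f hf
  refine (connectedComponentIn_eq (hpc.subset_connectedComponentIn (stn_arc_mem_left E huv) ?_
    (stn_arc_mem_right E huv))).symm
  intro z hz hzT
  exact (stn_tri_hit E hC hab hbc hac (s := v) z ⟨u, v, huv, hu, Or.inl hv, hz⟩ hzT).2 hv

theorem stnD_comp (hC : StnComp G a b c C) (hab : G.Adj a b) (hbc : G.Adj b c) (hac : G.Adj a c)
    {p : V} (hp : p ∈ C) {s : V} : ∀ z ∈ stnD E C s, z ≠ E.pos s →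
      z ∈ connectedComponentIn (triangleDrawing E hab hbc hac)ᶜ (E.pos p) := by
  rintro z ⟨u, v, h, hu, hv, hz⟩ hzs
  have key : ∀ y ∈ E.arc h, y ∈ triangleDrawing E hab hbc hac → y = E.pos v ∧ v ∉ C :=
    fun y hy hyT => stn_tri_hit E hC hab hbc hac (s := v) y ⟨u, v, h, hu, Or.inr rfl, hy⟩ hyT
  by_cases hzv : z = E.pos v
  · rcases hv with hv | rfl
    · rw [← stn_comp_eq E hC hab hbc hac hp v hv, hzv]
      exact mem_connectedComponentIn (stn_pos_notMem E hC hab hbc hac hv)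
    · exact absurd hzv hzs
  · rw [← stn_comp_eq E hC hab hbc hac hp u hu]
    exact stn_half_arc E h (fun y hy hyT => (key y hy hyT).1) z hz hzv

theorem stn_tri_compact (hab : G.Adj a b) (hbc : G.Adj b c) (hac : G.Adj a c) :
    IsCompact (triangleDrawing E hab hbc hac) :=
  ((stn_arc_arc E hab).isCompact.union (stn_arc_arc E hbc).isCompact).union
    (stn_arc_arc E hac).isCompact

/-- the two components do not lie in the same face of the triangle -/
theorem stn_not_same (hC : StnComp G a b c C) (hC' : StnComp G a b c C') (hd : Disjoint C C')
    (hab : G.Adj a b) (hbc : G.Adj b c) (hac : G.Adj a c)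
    (hA : ∃ x ∈ C, G.Adj a x) (hB : ∃ x ∈ C, G.Adj b x) (hG : ∃ x ∈ C, G.Adj c x)
    (hA' : ∃ x ∈ C', G.Adj a x) (hB' : ∃ x ∈ C', G.Adj b x) (hG' : ∃ x ∈ C', G.Adj c x)
    {p q : V} (hp : p ∈ C) (hq : q ∈ C')
    (h : connectedComponentIn (triangleDrawing E hab hbc hac)ᶜ (E.pos p) =
      connectedComponentIn (triangleDrawing E hab hbc hac)ᶜ (E.pos q)) : False := by
  obtain ⟨xa, hxa, haxa⟩ := hA
  obtain ⟨xb, hxb, hbxb⟩ := hB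
  obtain ⟨xc, hxc, hcxc⟩ := hG
  obtain ⟨ya, hya, haya⟩ := hA'
  obtain ⟨yb, hyb, hbyb⟩ := hB'
  obtain ⟨yc, hyc, hcyc⟩ := hG'
  have hpT := stn_pos_notMem E hC hab hbc hac hp
  have hqT := stn_pos_notMem E hC' hab hbc hac hq
  have hpq : p ≠ q := by rintro rfl; exact Set.disjoint_left.1 hd hp hq
  have na : a ∉ C := fun h => (hC.sub a h).1 rfl
  have nb : b ∉ C := fun h => (hC.sub b h).2.1 rfl
  have nc : c ∉ C := fun h => (hC.sub c h).2.2 rfl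
  have na' : a ∉ C' := fun h => (hC'.sub a h).1 rfl
  have nb' : b ∉ C' := fun h => (hC'.sub b h).2.1 rfl
  have nc' : c ∉ C' := fun h => (hC'.sub c h).2.2 rfl
  set U := connectedComponentIn (triangleDrawing E hab hbc hac)ᶜ (E.pos p) with hU
  have hUT : ∀ z ∈ U, z ∉ triangleDrawing E hab hbc hac :=
    fun z hz => connectedComponentIn_subset _ _ hz
  have j34 : JoinedIn U (E.pos p) (E.pos q) :=
    stn_joined (stn_tri_compact E hab hbc hac).isClosed hpT hqT h
  have d1 : Disjoint (E.arc hab) U :=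
    Set.disjoint_left.2 fun z hz hz' => hUT z hz' (Or.inl (Or.inl hz))
  have d2 : Disjoint (E.arc hbc) U :=
    Set.disjoint_left.2 fun z hz hz' => hUT z hz' (Or.inl (Or.inr hz))
  have d3 : Disjoint (E.arc hac) U :=
    Set.disjoint_left.2 fun z hz hz' => hUT z hz' (Or.inr hz)
  have d4 : Disjoint (E.arc hab) (stnD E C c) := Set.disjoint_left.2 fun z hz hz' => by
    rcases (stnD_arc E hab na nb z hz' hz).2 with h | h
    · exact hac.ne h.symm
    · exact hbc.ne h.symm
  have d5 : Disjoint (E.arc hab) (stnD E C' c) := Set.disjoint_left.2 fun z hz hz' => by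
    rcases (stnD_arc E hab na' nb' z hz' hz).2 with h | h
    · exact hac.ne h.symm
    · exact hbc.ne h.symm
  have d6 : Disjoint (E.arc hac) (stnD E C b) := Set.disjoint_left.2 fun z hz hz' => by
    rcases (stnD_arc E hac na nc z hz' hz).2 with h | h
    · exact hab.ne h.symm
    · exact hbc.ne h
  have d7 : Disjoint (E.arc hac) (stnD E C' b) := Set.disjoint_left.2 fun z hz hz' => by
    rcases (stnD_arc E hac na' nc' z hz' hz).2 with h | h
    · exact hab.ne h.symm
    · exact hbc.ne h
  have d8 : Disjoint (stnD E C a) (E.arc hbc) := Set.disjoint_left.2 fun z hz' hz => by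
    rcases (stnD_arc E hbc nb nc z hz' hz).2 with h | h
    · exact hab.ne h
    · exact hac.ne h
  have d9 : Disjoint (stnD E C' a) (E.arc hbc) := Set.disjoint_left.2 fun z hz' hz => by
    rcases (stnD_arc E hbc nb' nc' z hz' hz).2 with h | h
    · exact hab.ne h
    · exact hac.ne h
  have e1 := stnD_disj E hd hab.ne na' nb
  have e2 := stnD_disj E hd hac.ne na' nc
  have e3 := stnD_disj E hd hbc.ne nb' nc
  have e4 := stnD_disj E hd.symm hab.ne na nb'
  have e5 := stnD_disj E hd.symm hac.ne na nc'
  have e6 := stnD_disj E hd.symm hbc.ne nb nc'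
  have sp := hC.sub p hp
  have sq := hC'.sub q hq
  have nab := hab.ne
  have nac := hac.ne
  have nbc := hbc.ne
  have hinj : Function.Injective ![a, b, c, p, q] := by
    intro i j hij
    fin_cases i <;> fin_cases j <;> simp_all
  refine stn_K5 (E.pos ∘ ![a, b, c, p, q]) (E.pos_inj.comp hinj)
    ![![∅, E.arc hab, E.arc hac, stnD E C a, stnD E C' a],
      ![∅, ∅, E.arc hbc, stnD E C b, stnD E C' b],
      ![∅, ∅, ∅, stnD E C c, stnD E C' c],
      ![∅, ∅, ∅, ∅, U], ![∅, ∅, ∅, ∅, ∅]] ?_ ?_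
  · have t1 := stn_arc_joined E hab
    have t2 := stn_arc_joined E hac
    have t3 := stn_arc_joined E hbc
    have t4 := (stnD_joined E hC xa hxa haxa p hp).symm
    have t5 := (stnD_joined E hC xb hxb hbxb p hp).symm
    have t6 := (stnD_joined E hC xc hxc hcxc p hp).symm
    have t7 := (stnD_joined E hC' ya hya haya q hq).symm
    have t8 := (stnD_joined E hC' yb hyb hbyb q hq).symm
    have t9 := (stnD_joined E hC' yc hyc hcyc q hq).symm
    intro i j hij
    fin_cases i <;> fin_cases j <;> first | exact absurd hij (by decide) | assumption
  · intro i j k l hij hkl hik hjk hjl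
    fin_cases i <;> fin_cases j <;> first | exact absurd hij (by decide) | skip
    all_goals fin_cases k <;> first | exact absurd hik (by decide) | exact absurd rfl hjk | skip
    all_goals
      fin_cases l <;> first | exact absurd hkl (by decide) | exact absurd rfl hjl | skip
    all_goals assumption

theorem stn_sub_arc {u v : V} (h : G.Adj u v) {x : ℝ × ℝ} (hx : x ∈ E.arc h) (hxv : x ≠ E.pos v) :
    JoinedIn (E.arc h \ {E.pos v}) x (E.pos u) := by
  obtain ⟨f, hf, hi, h0, h1, he⟩ := E.arc_curve h
  rw [← he] at hx
  obtain ⟨t, ht, rfl⟩ := hx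
  have ht1 : t < 1 := lt_of_le_of_ne ht.2 (by rintro rfl; exact hxv h1)
  have hm : ∀ s ∈ Icc (0:ℝ) 1, t * (1 - s) ∈ Icc (0:ℝ) 1 ∧ t * (1 - s) < 1 := by
    intro s hs
    have := hs.1
    have := hs.2
    have := ht.1
    have h2 : t * (1 - s) ≤ t := by nlinarith
    exact ⟨⟨by nlinarith, by linarith⟩, by linarith⟩
  apply JoinedIn.ofLine (f := fun s => f (t * (1 - s)))
  · exact hf.comp (by fun_prop) (fun s hs => (hm s hs).1)
  · simp
  · simpa using h0
  · rintro _ ⟨s, hs, rfl⟩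
    refine ⟨he ▸ ⟨_, (hm s hs).1, rfl⟩, ?_⟩
    intro e
    have e : f (t * (1 - s)) = E.pos v := e
    rw [← h1] at e
    exact (hm s hs).2.ne (hi (hm s hs).1 (by simp) e)

/-- connecting the far point to `a` along the arc `ab` -/
theorem stn_outer {T J K : Set (ℝ × ℝ)} (hT : IsClosed T) {u v : V} (h : G.Adj u v)
    (hTe : T = E.arc h ∪ (J ∪ K)) (hJ : StnArc J) (hK : StnArc K) (o : ℝ × ℝ) (hoJ : o ∈ J)
    (hoK : o ∈ K) (hJK : J ∩ K ⊆ {o}) (hv : E.pos v ∈ J ∪ K) (r p : ℝ × ℝ)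
    (hr : r ∉ T) (hp : p ∉ T) (hru : ¬ Bornology.IsBounded (connectedComponentIn Tᶜ r))
    (hpb : Bornology.IsBounded (connectedComponentIn Tᶜ p)) :
    JoinedIn (connectedComponentIn Tᶜ r ∪ (E.arc h \ {E.pos v})) r (E.pos u) := by
  have hsub : J ∪ K ⊆ T := hTe ▸ subset_union_right
  have hJKc : IsCompact (J ∪ K) := hJ.isCompact.union hK.isCompact
  have b1 := stn_two_arcs hJ hK o hoJ hoK hJK p (fun h => hp (hsub h))
  have b2 := stn_two_arcs hJ hK o hoJ hoK hJK r (fun h => hr (hsub h))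
  have j := stn_joined hJKc.isClosed (fun h => hr (hsub h)) (fun h => hp (hsub h))
    (stn_unbdd_eq hJKc.isBounded r p b2 b1)
  obtain ⟨x, ⟨hx1, hx2⟩, hxj⟩ := stn_first_hit hT j hr (fun hpr => by
    rw [connectedComponentIn_eq hpr] at hru
    exact hru hpb)
  have hx3 : x ∉ J ∪ K := connectedComponentIn_subset _ _ hx1
  have hx4 : x ∈ E.arc h := by
    rw [hTe] at hx2
    exact hx2.resolve_right hx3
  have hxv : x ≠ E.pos v := by rintro rfl; exact hx3 hv
  refine (hxj.mono ?_).trans ((stn_sub_arc E h hx4 hxv).mono subset_union_right)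
  exact union_subset_union_right _ (singleton_subset_iff.2 ⟨hx4, hxv⟩)

theorem stn_arcs_meet {u v w : V} (h : G.Adj u v) (h' : G.Adj v w) (huw : u ≠ w) :
    E.arc h ∩ E.arc h' ⊆ {E.pos v} := by
  rintro x ⟨h1, h2⟩
  have hne : s(u, v) ≠ s(v, w) := by
    intro e
    rcases Sym2.eq_iff.1 e with e | e
    · exact h.ne e.1
    · exact huw e.1
  obtain ⟨y, rfl, h5, h6⟩ := stn_common E h h' hne h1 h2
  rcases h5 with h5 | h5
  · rcases h6 with h6 | h6
    · exact absurd (h5.symm.trans h6) h.ne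
    · exact absurd (h5.symm.trans h6) huw
  · rw [h5]; rfl

theorem stnD_ray (hC : StnComp G a b c C) (hab : G.Adj a b) (hbc : G.Adj b c) (hac : G.Adj a c)
    {p : V} (hp : p ∈ C) (r : ℝ × ℝ)
    (hb : Bornology.IsBounded (connectedComponentIn (triangleDrawing E hab hbc hac)ᶜ (E.pos p)))
    (hr : ¬ Bornology.IsBounded (connectedComponentIn (triangleDrawing E hab hbc hac)ᶜ r))
    {s x y : V} (h : G.Adj x y) (hx : x ∉ C) (hy : y ∉ C) (hsx : s ≠ x)
    (hs : E.pos s ∈ triangleDrawing E hab hbc hac) :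
    Disjoint (stnD E C s)
      (connectedComponentIn (triangleDrawing E hab hbc hac)ᶜ r ∪ (E.arc h \ {E.pos y})) := by
  rw [Set.disjoint_left]
  rintro z hz (hz' | hz')
  · have hzs : z ≠ E.pos s := by
      rintro rfl
      exact connectedComponentIn_subset _ _ hz' hs
    have := stnD_comp E hC hab hbc hac hp z hz hzs
    rw [connectedComponentIn_eq this] at hb
    rw [connectedComponentIn_eq hz'] at hr
    exact hr hb
  · obtain ⟨e, h1 | h1⟩ := stnD_arc E h hx hy z hz hz'.1
    · exact hsx h1
    · exact hz'.2 (by rw [e, h1]; rfl)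

/-- the two components do not both lie in bounded faces of the triangle -/
theorem stn_not_bdd (hC : StnComp G a b c C) (hC' : StnComp G a b c C') (hd : Disjoint C C')
    (hab : G.Adj a b) (hbc : G.Adj b c) (hac : G.Adj a c)
    (hA : ∃ x ∈ C, G.Adj a x) (hB : ∃ x ∈ C, G.Adj b x) (hG : ∃ x ∈ C, G.Adj c x)
    (hA' : ∃ x ∈ C', G.Adj a x) (hB' : ∃ x ∈ C', G.Adj b x) (hG' : ∃ x ∈ C', G.Adj c x)
    {p q : V} (hp : p ∈ C) (hq : q ∈ C')
    (h1 : Bornology.IsBounded (connectedComponentIn (triangleDrawing E hab hbc hac)ᶜ (E.pos p)))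
    (h2 : Bornology.IsBounded (connectedComponentIn (triangleDrawing E hab hbc hac)ᶜ (E.pos q))) :
    False := by
  obtain ⟨xa, hxa, haxa⟩ := hA
  obtain ⟨xb, hxb, hbxb⟩ := hB
  obtain ⟨xc, hxc, hcxc⟩ := hG
  obtain ⟨ya, hya, haya⟩ := hA'
  obtain ⟨yb, hyb, hbyb⟩ := hB'
  obtain ⟨yc, hyc, hcyc⟩ := hG'
  have hpT := stn_pos_notMem E hC hab hbc hac hp
  have hpq : p ≠ q := by rintro rfl; exact Set.disjoint_left.1 hd hp hq
  have na : a ∉ C := fun h => (hC.sub a h).1 rfl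
  have nb : b ∉ C := fun h => (hC.sub b h).2.1 rfl
  have nc : c ∉ C := fun h => (hC.sub c h).2.2 rfl
  have na' : a ∉ C' := fun h => (hC'.sub a h).1 rfl
  have nb' : b ∉ C' := fun h => (hC'.sub b h).2.1 rfl
  have nc' : c ∉ C' := fun h => (hC'.sub c h).2.2 rfl
  have Tc := stn_tri_compact E hab hbc hac
  have hca : G.Adj c a := hac.symm
  have eca : E.arc hca = E.arc hac := E.arc_symm hac
  obtain ⟨r, hrT, hr0⟩ := stn_exists_far Tc.isBounded
  have hr := hr0 _ subset_rfl
  have Ta : E.pos a ∈ triangleDrawing E hab hbc hac := Or.inl (Or.inl (stn_arc_mem_left E hab))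
  have Tb : E.pos b ∈ triangleDrawing E hab hbc hac := Or.inl (Or.inl (stn_arc_mem_right E hab))
  have Tg : E.pos c ∈ triangleDrawing E hab hbc hac := Or.inl (Or.inr (stn_arc_mem_right E hbc))
  have nab := hab.ne
  have nac := hac.ne
  have nbc := hbc.ne
  have r1 := (stn_outer E Tc.isClosed hab
    (J := E.arc hbc) (K := E.arc hca) (by
      rw [eca]; unfold triangleDrawing; rw [union_assoc])
    (stn_arc_arc E hbc) (stn_arc_arc E hca) (E.pos c) (stn_arc_mem_right E hbc)
    (stn_arc_mem_left E hca) (stn_arcs_meet E hbc hca nab.symm) (Or.inl (stn_arc_mem_left E hbc))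
    r (E.pos p) hrT hpT hr h1).symm
  have r2 := (stn_outer E Tc.isClosed hbc
    (J := E.arc hca) (K := E.arc hab) (by
      rw [eca]; unfold triangleDrawing; ext; simp only [mem_union]; tauto)
    (stn_arc_arc E hca) (stn_arc_arc E hab) (E.pos a) (stn_arc_mem_right E hca)
    (stn_arc_mem_left E hab) (stn_arcs_meet E hca hab nbc.symm) (Or.inl (stn_arc_mem_left E hca))
    r (E.pos p) hrT hpT hr h1).symm
  have r3 := (stn_outer E Tc.isClosed hca
    (J := E.arc hab) (K := E.arc hbc) (by
      rw [eca]; unfold triangleDrawing; ext; simp only [mem_union]; tauto)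
    (stn_arc_arc E hab) (stn_arc_arc E hbc) (E.pos b) (stn_arc_mem_right E hab)
    (stn_arc_mem_left E hbc) (stn_arcs_meet E hab hbc nac) (Or.inl (stn_arc_mem_left E hab))
    r (E.pos p) hrT hpT hr h1).symm
  have e1 := stnD_disj E hd hab.ne na' nb
  have e2 := stnD_disj E hd hac.ne na' nc
  have e3 := stnD_disj E hd hbc.ne nb' nc
  have e4 := stnD_disj E hd hab.ne.symm nb' na
  have e5 := stnD_disj E hd hac.ne.symm nc' na
  have e6 := stnD_disj E hd hbc.ne.symm nc' nb
  have f1 := stnD_ray E hC hab hbc hac hp r h1 hr hab na nb nab.symm Tb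
  have f2 := stnD_ray E hC hab hbc hac hp r h1 hr hab na nb nac.symm Tg
  have f3 := stnD_ray E hC hab hbc hac hp r h1 hr hbc nb nc nab Ta
  have f4 := stnD_ray E hC hab hbc hac hp r h1 hr hbc nb nc nbc.symm Tg
  have f5 := stnD_ray E hC hab hbc hac hp r h1 hr hca nc na nac Ta
  have f6 := stnD_ray E hC hab hbc hac hp r h1 hr hca nc na nbc Tb
  have g1 := stnD_ray E hC' hab hbc hac hq r h2 hr hab na' nb' nab.symm Tb
  have g2 := stnD_ray E hC' hab hbc hac hq r h2 hr hab na' nb' nac.symm Tg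
  have g3 := stnD_ray E hC' hab hbc hac hq r h2 hr hbc nb' nc' nab Ta
  have g4 := stnD_ray E hC' hab hbc hac hq r h2 hr hbc nb' nc' nbc.symm Tg
  have g5 := stnD_ray E hC' hab hbc hac hq r h2 hr hca nc' na' nac Ta
  have g6 := stnD_ray E hC' hab hbc hac hq r h2 hr hca nc' na' nbc Tb
  have sp := hC.sub p hp
  have sq := hC'.sub q hq
  have hinj : Function.Injective ![E.pos a, E.pos b, E.pos c, E.pos p, E.pos q, r] := by
    have ra : E.pos a ≠ r := by rintro rfl; exact hrT Ta
    have rb : E.pos b ≠ r := by rintro rfl; exact hrT Tb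
    have rc : E.pos c ≠ r := by rintro rfl; exact hrT Tg
    have rp : E.pos p ≠ r := by rintro rfl; exact hr h1
    have rq : E.pos q ≠ r := by rintro rfl; exact hr h2
    have w1 := E.pos_inj.ne nab
    have w2 := E.pos_inj.ne nac
    have w3 := E.pos_inj.ne nbc
    have w4 := E.pos_inj.ne hpq
    have w5 := E.pos_inj.ne sp.1
    have w6 := E.pos_inj.ne sp.2.1
    have w7 := E.pos_inj.ne sp.2.2
    have w8 := E.pos_inj.ne sq.1
    have w9 := E.pos_inj.ne sq.2.1
    have w0 := E.pos_inj.ne sq.2.2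
    clear * - ra rb rc rp rq w1 w2 w3 w4 w5 w6 w7 w8 w9 w0
    intro i j hij
    fin_cases i <;> fin_cases j <;> first
      | rfl
      | (exfalso; first
          | exact ra hij | exact rb hij | exact rc hij | exact rp hij | exact rq hij
          | exact w1 hij | exact w2 hij | exact w3 hij | exact w4 hij | exact w5 hij
          | exact w6 hij | exact w7 hij | exact w8 hij | exact w9 hij | exact w0 hij
          | exact ra hij.symm | exact rb hij.symm | exact rc hij.symm | exact rp hij.symm
          | exact rq hij.symm
          | exact w1 hij.symm | exact w2 hij.symm | exact w3 hij.symm | exact w4 hij.symm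
          | exact w5 hij.symm | exact w6 hij.symm | exact w7 hij.symm | exact w8 hij.symm
          | exact w9 hij.symm | exact w0 hij.symm)
  set U := connectedComponentIn (triangleDrawing E hab hbc hac)ᶜ r with hU
  refine stn_K33 ![E.pos a, E.pos b, E.pos c, E.pos p, E.pos q, r] hinj
    ![![∅, ∅, ∅, stnD E C a, stnD E C' a, U ∪ (E.arc hab \ {E.pos b})],
      ![∅, ∅, ∅, stnD E C b, stnD E C' b, U ∪ (E.arc hbc \ {E.pos c})],
      ![∅, ∅, ∅, stnD E C c, stnD E C' c, U ∪ (E.arc hca \ {E.pos a})],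
      fun _ => ∅, fun _ => ∅, fun _ => ∅] ?_ ?_
  · have t4 := (stnD_joined E hC xa hxa haxa p hp).symm
    have t5 := (stnD_joined E hC xb hxb hbxb p hp).symm
    have t6 := (stnD_joined E hC xc hxc hcxc p hp).symm
    have t7 := (stnD_joined E hC' ya hya haya q hq).symm
    have t8 := (stnD_joined E hC' yb hyb hbyb q hq).symm
    have t9 := (stnD_joined E hC' yc hyc hcyc q hq).symm
    intro i j hi hj
    fin_cases i <;> first | exact absurd hi (by decide) | skip
    all_goals fin_cases j <;> first | exact absurd hj (by decide) | assumption
  · intro i j k l hi hj hk hl hik hjl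
    fin_cases i <;> first | exact absurd hi (by decide) | skip
    all_goals fin_cases j <;> first | exact absurd hj (by decide) | skip
    all_goals fin_cases k <;> first | exact absurd hk (by decide) | exact absurd rfl hik | skip
    all_goals
      fin_cases l <;> first | exact absurd hl (by decide) | exact absurd hjl (by decide) | skip
    all_goals assumption

end StnTop

theorem stn_nbrs {V : Type u} {G : SimpleGraph V} (h3 : G.IsTriconnected)
    (hdeg : G.MaxDegreeLE 4) {a b c : V} {C C' : Set V}
    (hC : StnComp G a b c C) (hC' : StnComp G a b c C') (hd : Disjoint C C')
    (hab : G.Adj a b) (hbc : G.Adj b c) (hac : G.Adj a c) :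
    (G.neighborSet a).ncard = 4 ∧ ∃ x ∈ C, ∃ y ∈ C', G.Adj a x ∧ G.Adj a y ∧
      ∀ z, G.Adj a z → z ≠ b → z ≠ c → z = x ∨ z = y := by
  classical
  have : Finite V := (Nat.card_pos_iff.1 (lt_trans (by norm_num) h3.1)).2
  obtain ⟨x, hx, hax⟩ := hC.attach h3 hab.ne hac.ne
  obtain ⟨y, hy, hay⟩ := hC'.attach h3 hab.ne hac.ne
  have hxy : x ≠ y := by rintro rfl; exact Set.disjoint_left.1 hd hx hy
  have sx := hC.sub x hx
  have sy := hC'.sub y hy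
  have hsub : (({b, c, x, y} : Finset V) : Set V) ⊆ G.neighborSet a := by
    intro z hz
    simp only [Finset.coe_insert, Finset.coe_singleton, mem_insert_iff, mem_singleton_iff] at hz
    rcases hz with rfl | rfl | rfl | rfl <;> assumption
  have hcard : ({b, c, x, y} : Finset V).card = 4 := by
    rw [Finset.card_insert_of_notMem, Finset.card_insert_of_notMem, Finset.card_insert_of_notMem,
      Finset.card_singleton]
    all_goals simp [hxy, hbc.ne, sx.2.1.symm, sx.2.2.symm, sy.2.1.symm, sy.2.2.symm]
  have hle := Set.ncard_le_ncard hsub (Set.toFinite _)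
  rw [Set.ncard_coe_finset, hcard] at hle
  have heq := le_antisymm (hdeg a) hle
  have hset := Set.eq_of_subset_of_ncard_le hsub (by
    rw [Set.ncard_coe_finset, hcard]; exact hdeg a) (Set.toFinite _)
  refine ⟨heq, x, hx, y, hy, hax, hay, fun z hz hzb hzc => ?_⟩
  have : z ∈ G.neighborSet a := hz
  rw [← hset] at this
  simpa [hzb, hzc] using this

theorem stn_core1 {V : Type u} {G : SimpleGraph V} (h3 : G.IsTriconnected)
    (hdeg : G.MaxDegreeLE 4) {a b c : V} {C C' I : Set V}
    (hC : StnComp G a b c C) (hC' : StnComp G a b c C') (hd : Disjoint C C')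
    (hab : G.Adj a b) (hbc : G.Adj b c) (hac : G.Adj a c)
    (hI : C ⊆ I) (hI' : ∀ v ∈ C', v ∉ I) (hIs : ∀ v ∈ I, v ≠ a ∧ v ≠ b ∧ v ≠ c) :
    ∃ x ∈ C, G.Adj a x ∧ ∀ z ∈ I, G.Adj a z → z = x := by
  obtain ⟨-, x, hx, y, hy, hax, hay, hz⟩ := stn_nbrs h3 hdeg hC hC' hd hab hbc hac
  refine ⟨x, hx, hax, fun z hzI haz => ?_⟩
  rcases hz z haz (hIs z hzI).2.1 (hIs z hzI).2.2 with h | h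
  · exact h
  · exact absurd (h ▸ hzI) (hI' y hy)

theorem stn_core {V : Type u} {G : SimpleGraph V} (h3 : G.IsTriconnected)
    (hdeg : G.MaxDegreeLE 4) {a b c : V} {C C' I : Set V}
    (hC : StnComp G a b c C) (hC' : StnComp G a b c C') (hd : Disjoint C C')
    (hab : G.Adj a b) (hbc : G.Adj b c) (hac : G.Adj a c)
    (hI : C ⊆ I) (hI' : ∀ v ∈ C', v ∉ I) (hIs : ∀ v ∈ I, v ≠ a ∧ v ≠ b ∧ v ≠ c) :
    (∀ v ∈ ({a, b, c} : Set V), ∃! x : V, x ∈ I ∧ G.Adj v x) ∧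
    (∀ p q r : V, p ∈ I → G.Adj a p → q ∈ I → G.Adj b q → r ∈ I → G.Adj c r →
      ((p ≠ q ∧ q ≠ r ∧ p ≠ r) ∨ (p = q ∧ q = r))) := by
  obtain ⟨x, hx, hax, ux⟩ := stn_core1 h3 hdeg hC hC' hd hab hbc hac hI hI' hIs
  obtain ⟨y, hy, hby, uy⟩ := stn_core1 h3 hdeg hC.rot hC'.rot hd hbc hac.symm hab.symm hI hI'
    (fun v hv => ⟨(hIs v hv).2.1, (hIs v hv).2.2, (hIs v hv).1⟩)
  obtain ⟨z, hz, hcz, uz⟩ := stn_core1 h3 hdeg hC.rot.rot hC'.rot.rot hd hac.symm hab hbc.symm hI hI'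
    (fun v hv => ⟨(hIs v hv).2.2, (hIs v hv).1, (hIs v hv).2.1⟩)
  constructor
  · rintro v (rfl | rfl | rfl)
    · exact ⟨x, ⟨hI hx, hax⟩, fun w hw => ux w hw.1 hw.2⟩
    · exact ⟨y, ⟨hI hy, hby⟩, fun w hw => uy w hw.1 hw.2⟩
    · exact ⟨z, ⟨hI hz, hcz⟩, fun w hw => uz w hw.1 hw.2⟩
  · intro p q r hp hap hq hbq hr hcr
    obtain rfl := ux p hp hap
    obtain rfl := uy q hq hbq
    obtain rfl := uz r hr hcr
    by_cases h1 : p = q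
    · right
      have := hC.third h3 hac.ne p r hx hz (fun w hw h => ux w (hI hw) h)
        (fun w hw h => (uy w (hI hw) h).trans h1.symm)
      exact ⟨h1, h1.symm.trans this.symm⟩
    by_cases h2 : q = r
    · right
      have := hC.rot.third h3 hab.ne.symm q p hy hx (fun w hw h => uy w (hI hw) h)
        (fun w hw h => (uz w (hI hw) h).trans h2.symm)
      exact ⟨this, h2⟩
    by_cases h4 : p = r
    · right
      have := hC.rot.rot.third h3 hbc.ne.symm r q hz hy (fun w hw h => uz w (hI hw) h)
        (fun w hw h => (ux w (hI hw) h).trans h4)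
      exact ⟨h4.trans this.symm, this⟩
    exact Or.inl ⟨h1, h2, h4⟩

theorem stn_sides {V : Type u} {G : SimpleGraph V} (h3 : G.IsTriconnected)
    (E : PlaneEmbedding G) {a b c : V} {C C' : Set V}
    (hC : StnComp G a b c C) (hC' : StnComp G a b c C') (hd : Disjoint C C')
    (hab : G.Adj a b) (hbc : G.Adj b c) (hac : G.Adj a c) :
    (C ⊆ insideTriangle E hab hbc hac ∧ C' ⊆ outsideTriangle E hab hbc hac) ∨
    (C' ⊆ insideTriangle E hab hbc hac ∧ C ⊆ outsideTriangle E hab hbc hac) := by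
  obtain ⟨p, hp⟩ := hC.ne
  obtain ⟨q, hq⟩ := hC'.ne
  have eC := stn_comp_eq E hC hab hbc hac hp
  have eC' := stn_comp_eq E hC' hab hbc hac hq
  have hA := hC.attach h3 hab.ne hac.ne
  have hB := hC.rot.attach h3 hbc.ne hab.ne.symm
  have hG := hC.rot.rot.attach h3 hac.ne.symm hbc.ne.symm
  have hA' := hC'.attach h3 hab.ne hac.ne
  have hB' := hC'.rot.attach h3 hbc.ne hab.ne.symm
  have hG' := hC'.rot.rot.attach h3 hac.ne.symm hbc.ne.symm
  have key : ∀ {D : Set V} {s : V}, StnComp G a b c D →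
      (∀ v ∈ D, connectedComponentIn (triangleDrawing E hab hbc hac)ᶜ (E.pos v) =
        connectedComponentIn (triangleDrawing E hab hbc hac)ᶜ (E.pos s)) →
      (Bornology.IsBounded (connectedComponentIn (triangleDrawing E hab hbc hac)ᶜ (E.pos s)) →
        D ⊆ insideTriangle E hab hbc hac) ∧
      (¬ Bornology.IsBounded (connectedComponentIn (triangleDrawing E hab hbc hac)ᶜ (E.pos s)) →
        D ⊆ outsideTriangle E hab hbc hac) := by
    intro D s hD he
    refine ⟨fun h v hv => ⟨(hD.sub v hv).1, (hD.sub v hv).2.1, (hD.sub v hv).2.2, ?_⟩,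
      fun h v hv => ⟨(hD.sub v hv).1, (hD.sub v hv).2.1, (hD.sub v hv).2.2, ?_⟩⟩
    · rw [he v hv]; exact h
    · rw [he v hv]; exact h
  by_cases h1 : Bornology.IsBounded
      (connectedComponentIn (triangleDrawing E hab hbc hac)ᶜ (E.pos p)) <;>
    by_cases h2 : Bornology.IsBounded
      (connectedComponentIn (triangleDrawing E hab hbc hac)ᶜ (E.pos q))
  · exact (stn_not_bdd E hC hC' hd hab hbc hac hA hB hG hA' hB' hG' hp hq h1 h2).elim
  · exact Or.inl ⟨(key hC eC).1 h1, (key hC' eC').2 h2⟩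
  · exact Or.inr ⟨(key hC' eC').1 h2, (key hC eC).2 h1⟩
  · exact (stn_not_same E hC hC' hd hab hbc hac hA hB hG hA' hB' hG' hp hq
      (stn_unbdd_eq (stn_tri_compact E hab hbc hac).isBounded _ _ h1 h2)).elim

/-- In an embedded triconnected 4-planar graph, for a separating
triangle on `{a, b, c}`: every triangle vertex has degree exactly four and has exactly
one neighbor strictly inside and exactly one neighbor strictly outside the triangle;
moreover the three inside neighbors are pairwise distinct or all equal, and likewise for
the three outside neighbors. -/
theorem sep_triangle_neighbor_structure {V : Type u} (G : SimpleGraph V)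
    (h3 : G.IsTriconnected) (hdeg : G.MaxDegreeLE 4) (E : PlaneEmbedding G)
    {a b c : V} (hT : G.IsSepTriangle a b c) :
    (∀ v ∈ ({a, b, c} : Set V), (G.neighborSet v).ncard = 4) ∧
    (∀ v ∈ ({a, b, c} : Set V),
      (∃! x : V, x ∈ insideTriangle E hT.1 hT.2.1 hT.2.2.1 ∧ G.Adj v x) ∧
      (∃! x : V, x ∈ outsideTriangle E hT.1 hT.2.1 hT.2.2.1 ∧ G.Adj v x)) ∧
    (∀ ain bin cin : V,
      ain ∈ insideTriangle E hT.1 hT.2.1 hT.2.2.1 → G.Adj a ain →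
      bin ∈ insideTriangle E hT.1 hT.2.1 hT.2.2.1 → G.Adj b bin →
      cin ∈ insideTriangle E hT.1 hT.2.1 hT.2.2.1 → G.Adj c cin →
      ((ain ≠ bin ∧ bin ≠ cin ∧ ain ≠ cin) ∨ (ain = bin ∧ bin = cin))) ∧
    (∀ aout bout cout : V,
      aout ∈ outsideTriangle E hT.1 hT.2.1 hT.2.2.1 → G.Adj a aout →
      bout ∈ outsideTriangle E hT.1 hT.2.1 hT.2.2.1 → G.Adj b bout →
      cout ∈ outsideTriangle E hT.1 hT.2.1 hT.2.2.1 → G.Adj c cout →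
      ((aout ≠ bout ∧ bout ≠ cout ∧ aout ≠ cout) ∨ (aout = bout ∧ bout = cout))) := by
  have hab := hT.1
  have hbc := hT.2.1
  have hac := hT.2.2.1
  obtain ⟨C, C', hC, hC', hd, hin, hout⟩ : ∃ C C' : Set V, StnComp G a b c C ∧
      StnComp G a b c C' ∧ Disjoint C C' ∧ C ⊆ insideTriangle E hT.1 hT.2.1 hT.2.2.1 ∧
      C' ⊆ outsideTriangle E hT.1 hT.2.1 hT.2.2.1 := by
    obtain ⟨C₁, C₂, h1, h2, hd⟩ := stn_two_comps G h3 hT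
    rcases stn_sides h3 E h1 h2 hd hT.1 hT.2.1 hT.2.2.1 with h | h
    · exact ⟨C₁, C₂, h1, h2, hd, h⟩
    · exact ⟨C₂, C₁, h2, h1, hd.symm, h⟩
  obtain ⟨i1, i2⟩ := stn_core h3 hdeg hC hC' hd hab hbc hac hin
    (fun v hv h => (hout hv).2.2.2 h.2.2.2) (fun v hv => ⟨hv.1, hv.2.1, hv.2.2.1⟩)
  obtain ⟨o1, o2⟩ := stn_core h3 hdeg hC' hC hd.symm hab hbc hac hout
    (fun v hv h => h.2.2.2 (hin hv).2.2.2) (fun v hv => ⟨hv.1, hv.2.1, hv.2.2.1⟩)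
  refine ⟨?_, fun v hv => ⟨i1 v hv, o1 v hv⟩, i2, o2⟩
  rintro v (rfl | rfl | rfl)
  · exact (stn_nbrs h3 hdeg hC hC' hd hab hbc hac).1
  · exact (stn_nbrs h3 hdeg hC.rot hC'.rot hd hbc hac.symm hab.symm).1
  · exact (stn_nbrs h3 hdeg hC.rot.rot hC'.rot.rot hd hac.symm hab hbc.symm).1
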